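/- Let k be a field of characteristic different from 2, let q₁, q₂, q₃ ∈ k[x,z] be binary quadratic forms, and let f ∈ k[x,z] be any binary quadratic form. Then (1/2)·R(q₁,q₂,q₃)·f = (f,q₁*)₂·q₁ + (f,q₂*)₂·q₂ + (f,q₃*)₂·q₃, where the second transvectants (f,q_i*)₂ are constants. -/

import Mathlib

open MvPolynomial

/-- Iterated partial derivative in the variable `x` (the variable `0`). -/
noncomputable def dX {k : Type*} [CommSemiring k] (n : ℕ) (p : MvPolynomial (Fin 2) k) :
    MvPolynomial (Fin 2) k :=
  (fun q => pderiv (0 : Fin 2) q)^[n] p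

/-- Iterated partial derivative in the variable `z` (the variable `1`). -/
noncomputable def dZ {k : Type*} [CommSemiring k] (n : ℕ) (p : MvPolynomial (Fin 2) k) :
    MvPolynomial (Fin 2) k :=
  (fun q => pderiv (1 : Fin 2) q)^[n] p

/-- The `h`-th transvectant of two binary forms of degrees `r₁` and `r₂`. -/
noncomputable def transvectant {k : Type*} [Field k] (r₁ r₂ h : ℕ)
    (f g : MvPolynomial (Fin 2) k) : MvPolynomial (Fin 2) k :=
  C ((((r₁ - h).factorial * (r₂ - h).factorial : ℕ) : k) /
      (((r₁.factorial * r₂.factorial : ℕ)) : k)) *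
    ∑ j ∈ Finset.range (h + 1),
      C ((-1 : k) ^ j * (h.choose j : k)) * (dX (h - j) (dZ j f) * dX j (dZ (h - j) g))

/-- The determinant `R(q₁,q₂,q₃)` of three binary quadratic forms in the basis `x², xz, z²`. -/
noncomputable def Rdet {k : Type*} [CommRing k] (q₁ q₂ q₃ : MvPolynomial (Fin 2) k) : k :=
  Matrix.det
    !![coeff (Finsupp.single 0 2) q₁, coeff (Finsupp.single 0 1 + Finsupp.single 1 1) q₁,
         coeff (Finsupp.single 1 2) q₁;
       coeff (Finsupp.single 0 2) q₂, coeff (Finsupp.single 0 1 + Finsupp.single 1 1) q₂,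
         coeff (Finsupp.single 1 2) q₂;
       coeff (Finsupp.single 0 2) q₃, coeff (Finsupp.single 0 1 + Finsupp.single 1 1) q₃,
         coeff (Finsupp.single 1 2) q₃]

/-!
Up to a factor `1/2`, the first transvectant `(q, r)₁` is the cross product of the quadratic forms
`q` and `r` with respect to the bilinear form given by the second transvectant:
`(f, (q, r)₁)₂ = (1/2) · R(f, q, r)`. The identity is therefore Cramer's rule for four vectors in a
three-dimensional space, `R(q₁, q₂, q₃) f = R(f, q₂, q₃) q₁ + R(q₁, f, q₃) q₂ + R(q₁, q₂, f) q₃`,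
after cyclic permutations of the arguments on the right.
-/

theorem det_smul_eq_sum_det_updateRow_smul {n R : Type*} [Fintype n] [DecidableEq n] [CommRing R]
    (A : Matrix n n R) (b : n → R) :
    A.det • b = ∑ i, (A.updateRow i b).det • A i := by
  rw [← Matrix.det_transpose, ← Matrix.mulVec_cramer, Matrix.mulVec_transpose,
    Matrix.vecMul_eq_sum]
  simp only [Matrix.cramer_transpose_apply]

section CommSemiring

variable {R : Type*} [CommSemiring R]

theorem binaryForm_ext {n : ℕ} {p q : MvPolynomial (Fin 2) R}
    (hp : p.IsHomogeneous n) (hq : q.IsHomogeneous n)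
    (h : ∀ i j, i + j = n → coeff (Finsupp.single 0 i + Finsupp.single 1 j) p =
      coeff (Finsupp.single 0 i + Finsupp.single 1 j) q) : p = q := by
  ext m
  by_cases hm : m.degree = n
  · have hm_eq : m = Finsupp.single 0 (m 0) + Finsupp.single 1 (m 1) := by
      ext i; fin_cases i <;> simp
    rw [hm_eq]
    exact h _ _ (by simpa [Finsupp.degree_eq_sum] using hm)
  · rw [hp.coeff_eq_zero hm, hq.coeff_eq_zero hm]

/-- The binary quadratic form with prescribed coefficients in the basis `x²`, `xz`, `z²`. -/
noncomputable def binaryQuadratic : (Fin 3 → R) →ₗ[R] MvPolynomial (Fin 2) R :=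
  Fintype.linearCombination R ![X 0 ^ 2, X 0 * X 1, X 1 ^ 2]

/-- The coefficients of a polynomial at `x²`, `xz`, `z²`; on binary quadratic forms this is the
inverse of `binaryQuadratic`. -/
noncomputable def quadraticCoeffs (q : MvPolynomial (Fin 2) R) : Fin 3 → R :=
  ![coeff (Finsupp.single 0 2) q, coeff (Finsupp.single 0 1 + Finsupp.single 1 1) q,
    coeff (Finsupp.single 1 2) q]

theorem binaryQuadratic_apply (v : Fin 3 → R) :
    binaryQuadratic v = C (v 0) * X 0 ^ 2 + C (v 1) * (X 0 * X 1) + C (v 2) * X 1 ^ 2 := by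
  simp [binaryQuadratic, Fintype.linearCombination_apply, Fin.sum_univ_three, smul_eq_C_mul]

theorem isHomogeneous_binaryQuadratic (v : Fin 3 → R) : (binaryQuadratic v).IsHomogeneous 2 := by
  rw [binaryQuadratic_apply]
  exact (((isHomogeneous_X_pow 0 2).C_mul _).add
    (((isHomogeneous_X R 0).mul (isHomogeneous_X R 1)).C_mul _)).add
      ((isHomogeneous_X_pow 1 2).C_mul _)

theorem quadraticCoeffs_binaryQuadratic (v : Fin 3 → R) :
    quadraticCoeffs (binaryQuadratic v) = v := by
  rw [binaryQuadratic_apply]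
  ext i
  fin_cases i <;>
    simp [quadraticCoeffs, X, monomial_mul, monomial_pow, coeff_C_mul, coeff_monomial,
      Finsupp.ext_iff]

theorem binaryQuadratic_quadraticCoeffs {q : MvPolynomial (Fin 2) R} (hq : q.IsHomogeneous 2) :
    binaryQuadratic (quadraticCoeffs q) = q := by
  have hcoeffs := quadraticCoeffs_binaryQuadratic (quadraticCoeffs q)
  refine binaryForm_ext (isHomogeneous_binaryQuadratic _) hq fun i j hij => ?_
  obtain ⟨rfl, rfl⟩ | ⟨rfl, rfl⟩ | ⟨rfl, rfl⟩ :
      (i = 2 ∧ j = 0) ∨ (i = 1 ∧ j = 1) ∨ (i = 0 ∧ j = 2) := by omega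
  · simpa [quadraticCoeffs] using congrFun hcoeffs 0
  · simpa [quadraticCoeffs] using congrFun hcoeffs 1
  · simpa [quadraticCoeffs] using congrFun hcoeffs 2

theorem C_two {σ : Type*} : (C 2 : MvPolynomial σ R) = 2 :=
  map_ofNat C 2

theorem pderiv_zero_binaryQuadratic (v : Fin 3 → R) :
    pderiv 0 (binaryQuadratic v) = C (2 * v 0) * X 0 + C (v 1) * X 1 := by
  simp only [binaryQuadratic_apply, map_add, pderiv_C, pderiv_mul, pderiv_pow, pderiv_X_self,
    pderiv_X_of_ne one_ne_zero, C_mul, C_two]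
  norm_num only
  ring

theorem pderiv_one_binaryQuadratic (v : Fin 3 → R) :
    pderiv 1 (binaryQuadratic v) = C (v 1) * X 0 + C (2 * v 2) * X 1 := by
  simp only [binaryQuadratic_apply, map_add, pderiv_C, pderiv_mul, pderiv_pow, pderiv_X_self,
    pderiv_X_of_ne zero_ne_one, C_mul, C_two]
  norm_num only
  ring

end CommSemiring

section CommRing

variable {R : Type*} [CommRing R]

theorem Rdet_eq_det_quadraticCoeffs (q₁ q₂ q₃ : MvPolynomial (Fin 2) R) :
    Rdet q₁ q₂ q₃ =
      (Matrix.of ![quadraticCoeffs q₁, quadraticCoeffs q₂, quadraticCoeffs q₃]).det :=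
  rfl

theorem Rdet_rotate (q₁ q₂ q₃ : MvPolynomial (Fin 2) R) :
    Rdet q₂ q₃ q₁ = Rdet q₁ q₂ q₃ := by
  simp only [Rdet_eq_det_quadraticCoeffs, Matrix.det_fin_three, Matrix.of_apply, Matrix.cons_val]
  ring

theorem Rdet_smul_quadraticCoeffs (q₁ q₂ q₃ f : MvPolynomial (Fin 2) R) :
    Rdet q₁ q₂ q₃ • quadraticCoeffs f =
      Rdet f q₂ q₃ • quadraticCoeffs q₁ + Rdet q₁ f q₃ • quadraticCoeffs q₂ +
        Rdet q₁ q₂ f • quadraticCoeffs q₃ := by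
  simp only [Rdet_eq_det_quadraticCoeffs]
  rw [det_smul_eq_sum_det_updateRow_smul, Fin.sum_univ_three]
  congr! 4 <;> ext i <;> fin_cases i <;> rfl

theorem C_Rdet_mul {q₁ q₂ q₃ f : MvPolynomial (Fin 2) R}
    (h₁ : q₁.IsHomogeneous 2) (h₂ : q₂.IsHomogeneous 2) (h₃ : q₃.IsHomogeneous 2)
    (hf : f.IsHomogeneous 2) :
    C (Rdet q₁ q₂ q₃) * f =
      C (Rdet f q₂ q₃) * q₁ + C (Rdet q₁ f q₃) * q₂ + C (Rdet q₁ q₂ f) * q₃ := by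
  simpa only [map_add, map_smul, smul_eq_C_mul, binaryQuadratic_quadraticCoeffs, h₁, h₂, h₃, hf]
    using congrArg binaryQuadratic (Rdet_smul_quadraticCoeffs q₁ q₂ q₃ f)

end CommRing

section Field

variable {k : Type*} [Field k]

theorem transvectant_one (r₁ r₂ : ℕ) (f g : MvPolynomial (Fin 2) k) :
    transvectant r₁ r₂ 1 f g =
      C ((((r₁ - 1).factorial * (r₂ - 1).factorial : ℕ) : k) /
          ((r₁.factorial * r₂.factorial : ℕ) : k)) *
        (pderiv 0 f * pderiv 1 g - pderiv 1 f * pderiv 0 g) := by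
  simp only [transvectant]
  congr 1
  simp only [dX, dZ, Finset.sum_range_succ, Finset.sum_range_zero, Function.iterate_zero,
    Function.iterate_one, id_eq, Nat.sub_zero, Nat.sub_self, Nat.choose_zero_right, Nat.choose_self,
    Nat.cast_one, C_mul, C_pow, C_neg, C_1]
  ring

theorem transvectant_two (r₁ r₂ : ℕ) (f g : MvPolynomial (Fin 2) k) :
    transvectant r₁ r₂ 2 f g =
      C ((((r₁ - 2).factorial * (r₂ - 2).factorial : ℕ) : k) /
          ((r₁.factorial * r₂.factorial : ℕ) : k)) *
        (pderiv 0 (pderiv 0 f) * pderiv 1 (pderiv 1 g)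
          - 2 * (pderiv 0 (pderiv 1 f) * pderiv 0 (pderiv 1 g))
          + pderiv 1 (pderiv 1 f) * pderiv 0 (pderiv 0 g)) := by
  simp only [transvectant]
  congr 1
  simp only [dX, dZ, Finset.sum_range_succ, Finset.sum_range_zero, Function.iterate_zero,
    Function.iterate_succ, Function.comp_apply, id_eq, Nat.sub_zero, Nat.sub_self,
    Nat.add_one_sub_one, Nat.choose_zero_right, Nat.choose_one_right, Nat.choose_self,
    Nat.cast_one, Nat.cast_ofNat, C_mul, C_pow, C_neg, C_1, C_two]
  ring

theorem transvectant_one_binaryQuadratic (h2 : (2 : k) ≠ 0) (u v : Fin 3 → k) :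
    transvectant 2 2 1 (binaryQuadratic u) (binaryQuadratic v) =
      binaryQuadratic ![(u 0 * v 1 - u 1 * v 0) / 2, u 0 * v 2 - u 2 * v 0,
        (u 1 * v 2 - u 2 * v 1) / 2] := by
  have jacobian : pderiv 0 (binaryQuadratic u) * pderiv 1 (binaryQuadratic v) -
      pderiv 1 (binaryQuadratic u) * pderiv 0 (binaryQuadratic v) =
      binaryQuadratic ![2 * (u 0 * v 1 - u 1 * v 0), 2 * (2 * (u 0 * v 2 - u 2 * v 0)),
        2 * (u 1 * v 2 - u 2 * v 1)] := by
    simp only [pderiv_zero_binaryQuadratic, pderiv_one_binaryQuadratic]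
    simp only [binaryQuadratic_apply, Matrix.cons_val, C_mul, C_sub, C_two]
    ring
  have prefactor : (((2 - 1).factorial * (2 - 1).factorial : ℕ) : k) /
      ((Nat.factorial 2 * Nat.factorial 2 : ℕ) : k) = 1 / (2 * 2) := by
    norm_num [Nat.factorial]
  rw [transvectant_one, jacobian, prefactor, ← smul_eq_C_mul, ← map_smul, Matrix.smul_vec3]
  congr 1
  ext i
  fin_cases i <;> simp only [Fin.reduceFinMk, Fin.zero_eta, Matrix.cons_val, smul_eq_mul] <;>
    field_simp

theorem transvectant_two_binaryQuadratic (h2 : (2 : k) ≠ 0) (u v : Fin 3 → k) :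
    transvectant 2 2 2 (binaryQuadratic u) (binaryQuadratic v) =
      C (u 0 * v 2 - u 1 * v 1 / 2 + u 2 * v 0) := by
  have hessian_pairing :
      pderiv 0 (pderiv 0 (binaryQuadratic u)) * pderiv 1 (pderiv 1 (binaryQuadratic v))
        - 2 * (pderiv 0 (pderiv 1 (binaryQuadratic u)) * pderiv 0 (pderiv 1 (binaryQuadratic v)))
        + pderiv 1 (pderiv 1 (binaryQuadratic u)) * pderiv 0 (pderiv 0 (binaryQuadratic v)) =
      C (2 * u 0 * (2 * v 2) - 2 * (u 1 * v 1) + 2 * u 2 * (2 * v 0)) := by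
    simp only [pderiv_zero_binaryQuadratic, pderiv_one_binaryQuadratic]
    simp only [map_add, pderiv_C_mul, pderiv_X_self, ne_eq, one_ne_zero, zero_ne_one,
      not_false_eq_true, pderiv_X_of_ne]
    simp only [C_mul, C_sub, C_two]
    ring
  have prefactor : (((2 - 2).factorial * (2 - 2).factorial : ℕ) : k) /
      ((Nat.factorial 2 * Nat.factorial 2 : ℕ) : k) = 1 / (2 * 2) := by
    norm_num [Nat.factorial]
  rw [transvectant_two, hessian_pairing, prefactor, ← C_mul]
  congr 1
  field_simp

theorem transvectant_two_transvectant_one (h2 : (2 : k) ≠ 0) {f q r : MvPolynomial (Fin 2) k}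
    (hf : f.IsHomogeneous 2) (hq : q.IsHomogeneous 2) (hr : r.IsHomogeneous 2) :
    transvectant 2 2 2 f (transvectant 2 2 1 q r) = C (1 / 2 * Rdet f q r) := by
  rw [← binaryQuadratic_quadraticCoeffs hf, ← binaryQuadratic_quadraticCoeffs hq,
    ← binaryQuadratic_quadraticCoeffs hr, transvectant_one_binaryQuadratic h2,
    transvectant_two_binaryQuadratic h2]
  simp only [Rdet_eq_det_quadraticCoeffs, quadraticCoeffs_binaryQuadratic, Matrix.det_fin_three,
    Matrix.of_apply, Matrix.cons_val]
  congr 1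
  ring

end Field

/-- For binary quadratic forms `q₁,q₂,q₃` over a field of characteristic `≠ 2` and any binary
quadratic form `f`, `(1/2)·R(q₁,q₂,q₃)·f = (f,q₁*)₂·q₁ + (f,q₂*)₂·q₂ + (f,q₃*)₂·q₃`, where
`q₁* = (q₂,q₃)₁`, `q₂* = (q₃,q₁)₁`, `q₃* = (q₁,q₂)₁` and the `(f,qᵢ*)₂` are constants. -/
theorem statement5 {k : Type*} [Field k] (hchar : (2 : k) ≠ 0)
    (q₁ q₂ q₃ : MvPolynomial (Fin 2) k)
    (h₁ : q₁.IsHomogeneous 2) (h₂ : q₂.IsHomogeneous 2) (h₃ : q₃.IsHomogeneous 2)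
    (f : MvPolynomial (Fin 2) k) (hf : f.IsHomogeneous 2) :
    C ((1 / 2 : k) * Rdet q₁ q₂ q₃) * f =
      C (constantCoeff (transvectant 2 2 2 f (transvectant 2 2 1 q₂ q₃))) * q₁ +
      C (constantCoeff (transvectant 2 2 2 f (transvectant 2 2 1 q₃ q₁))) * q₂ +
      C (constantCoeff (transvectant 2 2 2 f (transvectant 2 2 1 q₁ q₂))) * q₃ := by
  rw [transvectant_two_transvectant_one hchar hf h₂ h₃,
    transvectant_two_transvectant_one hchar hf h₃ h₁,
    transvectant_two_transvectant_one hchar hf h₁ h₂, Rdet_rotate q₁ f q₃,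
    ← Rdet_rotate f q₁ q₂]
  simp only [constantCoeff_C]
  simp only [C_mul]
  linear_combination C (1 / 2) * C_Rdet_mul h₁ h₂ h₃ hf
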